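/- Let E be a Banach space, T > 0, and let K be a Volterra kernel on [0,T] satisfying Condition (A) with exponent α ∈ [0, 1/4). Let ψ: [0,T]² → E be λ-Hölder bi-continuous with λ > 2α. Then both of the following hold as the mesh of the grid partition π of [0,T]² tends to 0: (i) ∫_{[0,T]²} ‖(K*⊗K*)(ψ^π − ψ)(u,v)‖_E² du dv → 0, and (ii) ∫_0^T ‖(K*⊗K*)(ψ^π − ψ)(r,r)‖_E dr → 0, where ψ^π is the step approximation of ψ associated with π. -/

import Mathlib

open MeasureTheory Set

noncomputable section

namespace YS

variable {E : Type*} [NormedAddCommGroup E] [NormedSpace ℝ E]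

/-- A Volterra kernel: a measurable `K : ℝ² → ℝ` with `K t s = 0` whenever `s ≥ t`. -/
def IsVolterraKernel (K : ℝ → ℝ → ℝ) : Prop :=
  Measurable (Function.uncurry K) ∧ ∀ t s : ℝ, t ≤ s → K t s = 0

/-- Condition (A) with exponent `α` and constant `C`; here `K' t s` denotes the partial
derivative `∂K(t,s)/∂t`, whose existence is part of the condition. -/
def CondA (T α C : ℝ) (K K' : ℝ → ℝ → ℝ) : Prop :=
  (∀ s t : ℝ, 0 < s → s < t → t ≤ T → |K t s| ≤ C * s ^ (-α) * (t - s) ^ (-α)) ∧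
  ∀ s t : ℝ, 0 < s → s < t → t ≤ T →
    HasDerivAt (fun r => K r s) (K' t s) t ∧ |K' t s| ≤ C * (t - s) ^ (-(α + 1))

/-- The operator `𝒦*`:  `(𝒦*φ)(s) = φ(s)K(T,s) + ∫_s^T [φ(r) − φ(s)] ∂K(r,s)/∂r dr`. -/
def Kstar (T : ℝ) (K K' : ℝ → ℝ → ℝ) (φ : ℝ → E) (s : ℝ) : E :=
  K T s • φ s + ∫ r in s..T, K' r s • (φ r - φ s)

/-- The operator `A^K`. -/
def AK (T : ℝ) (K' : ℝ → ℝ → ℝ) (φ : ℝ → E) (s : ℝ) : E :=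
  ∫ r in s..T, K' r s • (φ r - φ s)

/-- Rectangular increment `f(u₁,u₂;v₁,v₂)`. -/
def rectInc (ψ : ℝ → ℝ → E) (u₁ u₂ v₁ v₂ : ℝ) : E :=
  ψ u₁ v₁ + ψ u₂ v₂ - ψ u₁ v₂ - ψ u₂ v₁

/-- The operator `B^K`. -/
def BK (T : ℝ) (K' : ℝ → ℝ → ℝ) (ψ : ℝ → ℝ → E) (u v : ℝ) : E :=
  ∫ r₂ in v..T, ∫ r₁ in u..T, (K' r₁ u * K' r₂ v) • rectInc ψ u r₁ v r₂

/-- The operator `𝒦* ⊗ 𝒦*`. -/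
def KstarT (T : ℝ) (K K' : ℝ → ℝ → ℝ) (ψ : ℝ → ℝ → E) (u v : ℝ) : E :=
  (K T u * K T v) • ψ u v + K T v • AK T K' (fun x => ψ x v) u +
    K T u • AK T K' (fun y => ψ u y) v + BK T K' ψ u v

/-- A partition `0 = s₀ < s₁ < ⋯ < s_n = T` of `[0,T]`. -/
structure Partition (T : ℝ) where
  n : ℕ
  pts : ℕ → ℝ
  n_pos : 0 < n
  first : pts 0 = 0
  last : pts n = T
  lt : ∀ i < n, pts i < pts (i + 1)

/-- Mesh of a partition: the largest increment. -/
def Partition.mesh {T : ℝ} (P : Partition T) : ℝ :=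
  (Finset.range P.n).sup' (Finset.nonempty_range_iff.mpr P.n_pos.ne')
    fun i => P.pts (i + 1) - P.pts i

/-- One-dimensional step approximation `φ^π`. -/
def step1 {T : ℝ} (P : Partition T) (φ : ℝ → E) (s : ℝ) : E :=
  ∑ i ∈ Finset.range P.n,
    (Set.Ico (P.pts i) (P.pts (i + 1))).indicator (fun _ => φ (P.pts i)) s

/-- Two-dimensional step approximation `ψ^π` for the grid partition `P × Q`. -/
def step2 {T : ℝ} (P Q : Partition T) (ψ : ℝ → ℝ → E) (u v : ℝ) : E :=
  ∑ i ∈ Finset.range P.n, ∑ j ∈ Finset.range Q.n,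
    ((Set.Ico (P.pts i) (P.pts (i + 1))) ×ˢ (Set.Ico (Q.pts j) (Q.pts (j + 1)))).indicator
      (fun _ => ψ (P.pts i) (Q.pts j)) (u, v)

/-- `λ`-Hölder continuity on `[0,T]` with constant `C`. -/
def IsHolderWith (T lam C : ℝ) (φ : ℝ → E) : Prop :=
  ∀ t₁ ∈ Icc (0:ℝ) T, ∀ t₂ ∈ Icc (0:ℝ) T, ‖φ t₁ - φ t₂‖ ≤ C * |t₁ - t₂| ^ lam

/-- `λ`-Hölder continuity on `[0,T]`. -/
def IsHolder (T lam : ℝ) (φ : ℝ → E) : Prop := ∃ C : ℝ, IsHolderWith T lam C φ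

/-- `λ`-Hölder bi-continuity with constant `C`. -/
def IsHolderBiWith (T lam C : ℝ) (ψ : ℝ → ℝ → E) : Prop :=
  (∀ u₁ ∈ Icc (0:ℝ) T, ∀ u₂ ∈ Icc (0:ℝ) T, ∀ v ∈ Icc (0:ℝ) T,
      ‖ψ u₂ v - ψ u₁ v‖ ≤ C * |u₂ - u₁| ^ lam) ∧
  ∀ u ∈ Icc (0:ℝ) T, ∀ v₁ ∈ Icc (0:ℝ) T, ∀ v₂ ∈ Icc (0:ℝ) T,
      ‖ψ u v₂ - ψ u v₁‖ ≤ C * |v₂ - v₁| ^ lam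

/-- `λ`-Hölder bi-continuity. -/
def IsHolderBi (T lam : ℝ) (ψ : ℝ → ℝ → E) : Prop := ∃ C : ℝ, IsHolderBiWith T lam C ψ

/-- Strong `λ`-Hölder bi-continuity with constant `C`. -/
def IsStrongHolderBiWith (T lam C : ℝ) (ψ : ℝ → ℝ → E) : Prop :=
  IsHolderBiWith T lam C ψ ∧
  ∀ u₁ ∈ Icc (0:ℝ) T, ∀ u₂ ∈ Icc (0:ℝ) T, ∀ v₁ ∈ Icc (0:ℝ) T, ∀ v₂ ∈ Icc (0:ℝ) T,
    ‖rectInc ψ u₁ u₂ v₁ v₂‖ ≤ C * |u₂ - u₁| ^ lam * |v₂ - v₁| ^ lam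

/-- Strong `λ`-Hölder bi-continuity. -/
def IsStrongHolderBi (T lam : ℝ) (ψ : ℝ → ℝ → E) : Prop :=
  ∃ C : ℝ, IsStrongHolderBiWith T lam C ψ

/-- The covariance function `R(s,t) = ∫_0^{s∧t} K(t,r)K(s,r) dr` of the Volterra process. -/
def covR (K : ℝ → ℝ → ℝ) (s t : ℝ) : ℝ := ∫ r in (0:ℝ)..(min s t), K t r * K s r

/-- The 2D Riemann–Stieltjes sum of `f` against `g` over the grid partition `P × Q`. -/
def RSsum {T : ℝ} (P Q : Partition T) (f g : ℝ → ℝ → ℝ) : ℝ :=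
  ∑ i ∈ Finset.range P.n, ∑ j ∈ Finset.range Q.n,
    f (P.pts i) (Q.pts j) *
      rectInc g (P.pts i) (P.pts (i + 1)) (Q.pts j) (Q.pts (j + 1))

section aux

lemma aux_sing (T u e c : ℝ) (hu : u < T) (he : 0 < e) (hu0 : 0 ≤ u) (hc : 0 ≤ c) (f : ℝ → E)
    (hf : ∀ r ∈ Ioo u T, ‖f r‖ ≤ c * (r - u) ^ (e - 1)) :
    ‖∫ r in u..T, f r‖ ≤ c * (T ^ e / e) := by
  have hi : IntervalIntegrable (fun r => c * (r - u) ^ (e - 1)) volume u T := by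
    have h := (intervalIntegral.intervalIntegrable_rpow' (a := 0) (b := T - u) (r := e - 1)
      (by linarith)).comp_sub_right u
    simp only [zero_add, sub_add_cancel] at h
    exact h.const_mul c
  have h1 : ‖∫ r in u..T, f r‖ ≤ ∫ r in u..T, c * (r - u) ^ (e - 1) := by
    refine intervalIntegral.norm_integral_le_of_norm_le hu.le ?_ hi
    have : ∀ᵐ r : ℝ, r ≠ T := by simp [ae_iff]
    filter_upwards [this] with r hr h
    exact hf r ⟨h.1, lt_of_le_of_ne h.2 hr⟩
  refine h1.trans ?_
  rw [intervalIntegral.integral_const_mul,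
    intervalIntegral.integral_comp_sub_right (fun x => x ^ (e - 1)) u,
    integral_rpow (Or.inl (by linarith))]
  simp only [sub_self, sub_add_cancel, Real.zero_rpow he.ne', sub_zero]
  have : (T - u) ^ e ≤ T ^ e := Real.rpow_le_rpow (by linarith) (by linarith) he.le
  gcongr

lemma aux_int_le (T : ℝ) (hT : 0 < T) (f g : ℝ → ℝ)
    (hf : ∀ r ∈ Ioo 0 T, ‖f r‖ ≤ g r) (hg : IntervalIntegrable g volume 0 T) :
    ∫ r in (0:ℝ)..T, f r ≤ ∫ r in (0:ℝ)..T, g r := by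
  refine (Real.le_norm_self _).trans ?_
  refine intervalIntegral.norm_integral_le_of_norm_le (E := ℝ) hT.le ?_ hg
  have : ∀ᵐ r : ℝ, r ≠ T := by simp [ae_iff]
  filter_upwards [this] with r hr h
  exact hf r ⟨h.1, lt_of_le_of_ne h.2 hr⟩

lemma Partition.mono {T : ℝ} (P : Partition T) {i j : ℕ} (hij : i ≤ j) (hj : j ≤ P.n) :
    P.pts i ≤ P.pts j := by
  induction j, hij using Nat.le_induction with
  | base => exact le_rfl
  | succ k hk ih => exact (ih (by omega)).trans (P.lt k (by omega)).le

lemma Partition.mem_Icc {T : ℝ} (P : Partition T) {i : ℕ} (hi : i ≤ P.n) :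
    P.pts i ∈ Icc (0:ℝ) T := by
  refine ⟨?_, ?_⟩
  · rw [← P.first]; exact P.mono (Nat.zero_le _) hi
  · exact (P.mono hi le_rfl).trans_eq P.last

lemma Partition.exists_mem {T : ℝ} (P : Partition T) {u : ℝ} (hu : u ∈ Ico (0:ℝ) T) :
    ∃ i < P.n, u ∈ Ico (P.pts i) (P.pts (i + 1)) := by
  by_contra! h
  have : ∀ i ≤ P.n, P.pts i ≤ u := by
    intro i
    induction i with
    | zero => intro _; rw [P.first]; exact hu.1
    | succ k ih =>
      intro hk
      have := h k (by omega)
      by_contra! h2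
      exact this ⟨ih (by omega), h2⟩
  have := this P.n le_rfl
  rw [P.last] at this
  linarith [hu.2]

lemma Partition.uniq {T : ℝ} (P : Partition T) {u : ℝ} {i j : ℕ} (hi : i < P.n) (hj : j < P.n)
    (h1 : u ∈ Ico (P.pts i) (P.pts (i + 1))) (h2 : u ∈ Ico (P.pts j) (P.pts (j + 1))) :
    i = j := by
  rcases lt_trichotomy i j with h | h | h
  · have := P.mono (i := i + 1) (j := j) h hj.le
    linarith [h1.2, h2.1]
  · exact h
  · have := P.mono (i := j + 1) (j := i) h hi.le
    linarith [h2.2, h1.1]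

lemma Partition.le_mesh {T : ℝ} (P : Partition T) {i : ℕ} (hi : i < P.n) :
    P.pts (i + 1) - P.pts i ≤ P.mesh :=
  Finset.le_sup' (fun i => P.pts (i + 1) - P.pts i) (Finset.mem_range.mpr hi)

lemma Partition.mesh_pos {T : ℝ} (P : Partition T) : 0 < P.mesh := by
  have := P.le_mesh P.n_pos
  have := P.lt 0 P.n_pos
  linarith

lemma step2_eq {T : ℝ} (P Q : Partition T) (ψ : ℝ → ℝ → E) {u v : ℝ} {i j : ℕ}
    (hi : i < P.n) (hj : j < Q.n)
    (h1 : u ∈ Ico (P.pts i) (P.pts (i + 1))) (h2 : v ∈ Ico (Q.pts j) (Q.pts (j + 1))) :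
    step2 P Q ψ u v = ψ (P.pts i) (Q.pts j) := by
  unfold step2
  rw [Finset.sum_eq_single i, Finset.sum_eq_single j]
  · rw [indicator_of_mem]; exact ⟨h1, h2⟩
  · intro b hb hne
    rw [indicator_of_notMem]
    rintro ⟨_, h⟩
    exact hne (Q.uniq (Finset.mem_range.mp hb) hj h h2)
  · intro h; exact absurd (Finset.mem_range.mpr hj) h
  · intro b hb hne
    refine Finset.sum_eq_zero fun c _ => ?_
    rw [indicator_of_notMem]
    rintro ⟨h, _⟩
    exact hne (P.uniq (Finset.mem_range.mp hb) hi h h1)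
  · intro h; exact absurd (Finset.mem_range.mpr hi) h

/-- the cell weight -/
def qP {T : ℝ} (P : Partition T) (lam b u : ℝ) : ℝ :=
  ∑ i ∈ Finset.range P.n, (Ico (P.pts i) (P.pts (i + 1))).indicator
    (fun u => (P.pts (i + 1) - P.pts i) ^ lam * (P.pts (i + 1) - u) ^ (-(2 * b))) u

lemma qP_nonneg {T : ℝ} (P : Partition T) (lam b u : ℝ) : 0 ≤ qP P lam b u := by
  refine Finset.sum_nonneg fun i hi => indicator_nonneg (fun x hx => ?_) u
  have := P.lt i (Finset.mem_range.mp hi)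
  have := hx.2
  exact mul_nonneg (Real.rpow_nonneg (by linarith) _) (Real.rpow_nonneg (by linarith) _)

lemma qP_ge {T : ℝ} (P : Partition T) (lam b u : ℝ) {i : ℕ} (hi : i < P.n)
    (h1 : u ∈ Ico (P.pts i) (P.pts (i + 1))) :
    (P.pts (i + 1) - P.pts i) ^ lam * (P.pts (i + 1) - u) ^ (-(2 * b)) ≤ qP P lam b u := by
  unfold qP
  have := Finset.single_le_sum (s := Finset.range P.n)
    (f := fun i => (Ico (P.pts i) (P.pts (i + 1))).indicator
    (fun u => (P.pts (i + 1) - P.pts i) ^ lam * (P.pts (i + 1) - u) ^ (-(2 * b))) u)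
    (fun i hi => by
      refine indicator_nonneg (fun x hx => ?_) u
      have := P.lt i (Finset.mem_range.mp hi)
      have := hx.2
      exact mul_nonneg (Real.rpow_nonneg (by linarith) _) (Real.rpow_nonneg (by linarith) _))
    (Finset.mem_range.mpr hi)
  simpa [indicator_of_mem h1] using this

lemma aux_cell (p q c d : ℝ) (hpq : p < q) (hd : d < 1) :
    Integrable ((Ico p q).indicator (fun u => c * (q - u) ^ (-d))) volume ∧
    ∫ u, (Ico p q).indicator (fun u => c * (q - u) ^ (-d)) u
      = c * ((q - p) ^ (1 - d) / (1 - d)) := by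
  have hi : IntervalIntegrable (fun u => c * (q - u) ^ (-d)) volume p q := by
    have h := (intervalIntegral.intervalIntegrable_rpow' (a := q - p) (b := 0) (r := -d)
      (by linarith)).comp_sub_left q
    simp only [sub_zero, sub_sub_cancel] at h
    exact h.const_mul c
  constructor
  · rw [integrable_indicator_iff measurableSet_Ico, integrableOn_Ico_iff_integrableOn_Ioo,
      ← integrableOn_Ioc_iff_integrableOn_Ioo]
    exact (intervalIntegrable_iff_integrableOn_Ioc_of_le hpq.le).mp hi
  · rw [integral_indicator measurableSet_Ico, integral_Ico_eq_integral_Ioo,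
      ← integral_Ioc_eq_integral_Ioo, ← intervalIntegral.integral_of_le hpq.le,
      intervalIntegral.integral_const_mul,
      intervalIntegral.integral_comp_sub_left (fun x => x ^ (-d)) q,
      integral_rpow (Or.inl (by linarith))]
    have : -d + 1 ≠ 0 := by linarith
    simp only [sub_self, Real.zero_rpow this, sub_zero]
    rw [show -d + 1 = 1 - d by ring]

lemma qP_int {T : ℝ} (P : Partition T) (lam b m : ℝ) (hm : P.mesh ≤ m) (hb : 2 * b < 1)
    (hl : 2 * b ≤ lam) :
    Integrable (qP P lam b) volume ∧
    ∫ u, qP P lam b u ≤ m ^ (lam - 2 * b) * T / (1 - 2 * b) := by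
  constructor
  · unfold qP
    refine integrable_finsetSum _ fun i hi => ?_
    exact (aux_cell _ _ _ (2 * b) (P.lt i (Finset.mem_range.mp hi)) hb).1
  · unfold qP
    rw [integral_finsetSum]
    swap
    · intro i hi
      exact (aux_cell _ _ _ (2 * b) (P.lt i (Finset.mem_range.mp hi)) hb).1
    have h : ∀ i ∈ Finset.range P.n,
        ∫ u, (Ico (P.pts i) (P.pts (i + 1))).indicator
          (fun u => (P.pts (i + 1) - P.pts i) ^ lam * (P.pts (i + 1) - u) ^ (-(2 * b))) u
        ≤ m ^ (lam - 2 * b) / (1 - 2 * b) * (P.pts (i + 1) - P.pts i) := by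
      intro i hi
      have hlt := P.lt i (Finset.mem_range.mp hi)
      have hle := P.le_mesh (Finset.mem_range.mp hi)
      rw [(aux_cell _ _ _ (2 * b) hlt hb).2]
      set h := P.pts (i + 1) - P.pts i
      have hh : 0 < h := by simp only [h]; linarith
      have e : h ^ lam * h ^ (1 - 2 * b) = h ^ (lam - 2 * b) * h := by
        rw [← Real.rpow_add hh, ← Real.rpow_add_one hh.ne']
        congr 1; ring
      have e2 : h ^ (lam - 2 * b) ≤ m ^ (lam - 2 * b) :=
        Real.rpow_le_rpow hh.le (by linarith) (by linarith)
      calc h ^ lam * (h ^ (1 - 2 * b) / (1 - 2 * b))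
          = h ^ (lam - 2 * b) / (1 - 2 * b) * h := by rw [← mul_div_assoc, e]; ring
        _ ≤ _ := by
          have : 0 < 1 - 2 * b := by linarith
          gcongr
    refine (Finset.sum_le_sum h).trans ?_
    rw [← Finset.mul_sum, Finset.sum_range_sub, P.first, P.last]
    apply le_of_eq; ring

/-- the total weight -/
def WP {T : ℝ} (P : Partition T) (α lam b m u : ℝ) : ℝ :=
  m ^ lam * (u ^ (-(4 * α)) + (T - u) ^ (-(4 * α))) + m ^ (lam - 2 * b) + qP P lam b u

lemma kappa_int (T α : ℝ) (hα' : α < 1 / 4) :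
    IntervalIntegrable (fun u => u ^ (-(4 * α)) + (T - u) ^ (-(4 * α))) volume 0 T := by
  refine IntervalIntegrable.add (intervalIntegral.intervalIntegrable_rpow' (by linarith)) ?_
  have h := (intervalIntegral.intervalIntegrable_rpow' (a := T) (b := 0) (r := -(4 * α))
      (by linarith)).comp_sub_left T
  simpa using h

lemma WP_int {T : ℝ} (P : Partition T) (α lam b m : ℝ) (hT : 0 < T) (hα' : α < 1 / 4)
    (hm : P.mesh ≤ m) (hb : 2 * b < 1) (hl : 2 * b ≤ lam) :
    IntervalIntegrable (WP P α lam b m) volume 0 T ∧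
    ∫ u in (0:ℝ)..T, WP P α lam b m u ≤
      m ^ lam * (∫ u in (0:ℝ)..T, (u ^ (-(4 * α)) + (T - u) ^ (-(4 * α)))) +
      m ^ (lam - 2 * b) * (T + T / (1 - 2 * b)) := by
  have h1 := (kappa_int T α hα').const_mul (m ^ lam)
  have h2 : IntervalIntegrable (fun _ : ℝ => m ^ (lam - 2 * b)) volume 0 T :=
    intervalIntegrable_const
  have h3 := qP_int P lam b m hm hb hl
  have h3' : IntervalIntegrable (qP P lam b) volume 0 T := h3.1.intervalIntegrable
  refine ⟨(h1.add h2).add h3', ?_⟩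
  unfold WP
  rw [intervalIntegral.integral_add (h1.add h2) h3', intervalIntegral.integral_add h1 h2,
    intervalIntegral.integral_const_mul, intervalIntegral.integral_const]
  have : ∫ u in (0:ℝ)..T, qP P lam b u ≤ ∫ u, qP P lam b u := by
    rw [intervalIntegral.integral_of_le hT.le]
    exact setIntegral_le_integral h3.1 (Filter.Eventually.of_forall fun u => qP_nonneg P lam b u)
  have := this.trans h3.2
  simp only [sub_zero, smul_eq_mul]
  have e : m ^ (lam - 2 * b) * T / (1 - 2 * b) = m ^ (lam - 2 * b) * (T / (1 - 2 * b)) := by ring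
  linarith

lemma WP_ge {T : ℝ} (P : Partition T) (α lam b m u : ℝ) (hm : 0 < m) (hu : u ∈ Ioo 0 T) :
    0 ≤ m ^ lam * (u ^ (-(4 * α)) + (T - u) ^ (-(4 * α))) ∧
    m ^ lam * (u ^ (-(4 * α)) + (T - u) ^ (-(4 * α))) ≤ WP P α lam b m u ∧
    m ^ (lam - 2 * b) + qP P lam b u ≤ WP P α lam b m u := by
  have h1 : 0 ≤ u ^ (-(4 * α)) := Real.rpow_nonneg hu.1.le _
  have h2 : 0 ≤ (T - u) ^ (-(4 * α)) := Real.rpow_nonneg (by linarith [hu.2]) _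
  have h3 : 0 ≤ m ^ lam := by positivity
  have h4 : 0 ≤ m ^ (lam - 2 * b) := by positivity
  have h5 := qP_nonneg P lam b u
  have h6 : 0 ≤ m ^ lam * (u ^ (-(4 * α)) + (T - u) ^ (-(4 * α))) := by positivity
  unfold WP
  refine ⟨h6, by linarith, by linarith⟩

/-- one-dimensional abstract increment bound -/
lemma inc_bound {T : ℝ} (P : Partition T) (lam b m c : ℝ) (hm : P.mesh ≤ m) (hc : 0 ≤ c)
    (hb : 0 < b) (hl : 2 * b ≤ lam) (hl1 : lam ≤ 1) (f g : ℝ → E)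
    (hf : ∀ x ∈ Icc (0:ℝ) T, ∀ y ∈ Icc (0:ℝ) T, ‖f x - f y‖ ≤ c * |x - y| ^ lam)
    (hg : ∀ x ∈ Icc (0:ℝ) T, ∀ y ∈ Icc (0:ℝ) T, ‖g x - g y‖ ≤ c * |x - y| ^ lam)
    {u r : ℝ} {i i' : ℕ} (hi : i < P.n) (hi' : i' < P.n) (hur : u < r)
    (h1 : u ∈ Ico (P.pts i) (P.pts (i + 1))) (h2 : r ∈ Ico (P.pts i') (P.pts (i' + 1)))
    (hbd : ‖(f (P.pts i') - g r) - (f (P.pts i) - g u)‖ ≤ 4 * c * m ^ lam) :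
    ‖(f (P.pts i') - g r) - (f (P.pts i) - g u)‖ ≤
      4 * c * ((r - u) ^ (2 * b) * (m ^ (lam - 2 * b) + qP P lam b u)) := by
  have hm0 : 0 < m := P.mesh_pos.trans_le hm
  have hd : 0 < r - u := by linarith
  have hq := qP_ge P lam b u hi h1
  have hq0 := qP_nonneg P lam b u
  have hle := P.le_mesh hi
  have hlp := P.lt i hi
  have hi1 := P.mem_Icc hi.le
  have hi2 := P.mem_Icc (i := i + 1) hi
  have hi1' := P.mem_Icc hi'.le
  have hi2' := P.mem_Icc (i := i' + 1) hi'
  have hu : u ∈ Icc (0:ℝ) T := ⟨hi1.1.trans h1.1, h1.2.le.trans hi2.2⟩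
  have hr : r ∈ Icc (0:ℝ) T := ⟨hi1'.1.trans h2.1, h2.2.le.trans hi2'.2⟩
  have hD : 0 ≤ (r - u) ^ (2 * b) := by positivity
  have hM : 0 ≤ m ^ (lam - 2 * b) := by positivity
  rcases le_or_gt m (r - u) with hmr | hmr
  · refine hbd.trans ?_
    gcongr
    have : m ^ lam = m ^ (2 * b) * m ^ (lam - 2 * b) := by
      rw [← Real.rpow_add hm0]; congr 1; ring
    rw [this]
    refine mul_le_mul (Real.rpow_le_rpow hm0.le hmr (by linarith)) (by linarith) hM hD
  have hg' := hg r hr u hu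
  rw [abs_of_pos hd] at hg'
  have hsplit : (r - u) ^ lam ≤ (r - u) ^ (2 * b) * m ^ (lam - 2 * b) := by
    have : (r - u) ^ lam = (r - u) ^ (2 * b) * (r - u) ^ (lam - 2 * b) := by
      rw [← Real.rpow_add hd]; congr 1; ring
    rw [this]
    gcongr 1
    exact Real.rpow_le_rpow hd.le hmr.le (by linarith)
  by_cases hii : i = i'
  · subst hii
    have : (f (P.pts i) - g r) - (f (P.pts i) - g u) = -(g r - g u) := by abel
    rw [this, norm_neg]
    refine hg'.trans ?_
    calc c * (r - u) ^ lam ≤ c * ((r - u) ^ (2 * b) * m ^ (lam - 2 * b)) := by gcongr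
      _ ≤ 4 * c * ((r - u) ^ (2 * b) * (m ^ (lam - 2 * b) + qP P lam b u)) := by
        have e1 : 0 ≤ c * ((r - u) ^ (2 * b) * m ^ (lam - 2 * b)) := by positivity
        have e2 : 0 ≤ c * ((r - u) ^ (2 * b) * qP P lam b u) := by positivity
        nlinarith
  · have hlt : i < i' := by
      rcases lt_or_gt_of_ne hii with h | h
      · exact h
      · have := P.mono (i := i' + 1) (j := i) h hi.le
        linarith [h2.2, h1.1]
    have hmn := P.mono (i := i + 1) (j := i') hlt hi'.le
    have hf' := hf _ hi1' _ hi1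
    set h := P.pts (i + 1) - P.pts i with hh
    have hh0 : 0 < h := by linarith
    have hpp : |P.pts i' - P.pts i| ≤ (r - u) + h := by
      rw [abs_of_nonneg (by linarith)]
      linarith [h1.1, h1.2, h2.1]
    have hsub : |P.pts i' - P.pts i| ^ lam ≤ (r - u) ^ lam + h ^ lam :=
      (Real.rpow_le_rpow (abs_nonneg _) hpp (by linarith)).trans
        (Real.rpow_add_le_add_rpow hd.le hh0.le (by linarith) hl1)
    have hn : 0 < P.pts (i + 1) - u := by linarith [h1.2]
    have hhq : h ^ lam ≤ (r - u) ^ (2 * b) * qP P lam b u := by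
      have e1 : 1 ≤ (r - u) ^ (2 * b) * (P.pts (i + 1) - u) ^ (-(2 * b)) := by
        rw [Real.rpow_neg hn.le, ← div_eq_mul_inv, ← Real.div_rpow hd.le hn.le]
        apply Real.one_le_rpow _ (by linarith)
        rw [one_le_div hn]
        linarith [h2.1]
      calc h ^ lam ≤ h ^ lam * ((r - u) ^ (2 * b) * (P.pts (i + 1) - u) ^ (-(2 * b))) :=
            le_mul_of_one_le_right (by positivity) e1
        _ = (r - u) ^ (2 * b) * (h ^ lam * (P.pts (i + 1) - u) ^ (-(2 * b))) := by ring
        _ ≤ _ := by gcongr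
    have : (f (P.pts i') - g r) - (f (P.pts i) - g u) =
      (f (P.pts i') - f (P.pts i)) - (g r - g u) := by abel
    rw [this]
    refine (norm_sub_le _ _).trans ?_
    have s1 : c * |P.pts i' - P.pts i| ^ lam ≤
        c * ((r - u) ^ (2 * b) * m ^ (lam - 2 * b) + (r - u) ^ (2 * b) * qP P lam b u) := by
      gcongr; linarith
    have s2 : c * (r - u) ^ lam ≤ c * ((r - u) ^ (2 * b) * m ^ (lam - 2 * b)) := by gcongr
    have e1 : 0 ≤ c * ((r - u) ^ (2 * b) * m ^ (lam - 2 * b)) := by positivity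
    have e2 : 0 ≤ c * ((r - u) ^ (2 * b) * qP P lam b u) := by positivity
    nlinarith

lemma D_bound {T : ℝ} (P Q : Partition T) (ψ : ℝ → ℝ → E) (lam m c : ℝ) (hP : P.mesh ≤ m)
    (hQ : Q.mesh ≤ m) (hc : 0 ≤ c) (hl : 0 < lam) (hψ : IsHolderBiWith T lam c ψ) {u v : ℝ}
    (hu : u ∈ Ico 0 T) (hv : v ∈ Ico 0 T) :
    ‖step2 P Q ψ u v - ψ u v‖ ≤ 2 * c * m ^ lam := by
  obtain ⟨i, hi, hiu⟩ := P.exists_mem hu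
  obtain ⟨j, hj, hjv⟩ := Q.exists_mem hv
  rw [step2_eq P Q ψ hi hj hiu hjv]
  have a := hψ.1 u (Ico_subset_Icc_self hu) _ (P.mem_Icc hi.le) _ (Q.mem_Icc hj.le)
  have b := hψ.2 u (Ico_subset_Icc_self hu) v (Ico_subset_Icc_self hv) _ (Q.mem_Icc hj.le)
  have a' : |P.pts i - u| ^ lam ≤ m ^ lam := by
    refine Real.rpow_le_rpow (abs_nonneg _) ?_ hl.le
    rw [abs_le]; constructor <;> linarith [hiu.1, hiu.2, P.le_mesh hi, P.mesh_pos]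
  have b' : |Q.pts j - v| ^ lam ≤ m ^ lam := by
    refine Real.rpow_le_rpow (abs_nonneg _) ?_ hl.le
    rw [abs_le]; constructor <;> linarith [hjv.1, hjv.2, Q.le_mesh hj, Q.mesh_pos]
  have : ψ (P.pts i) (Q.pts j) - ψ u v =
    (ψ (P.pts i) (Q.pts j) - ψ u (Q.pts j)) + (ψ u (Q.pts j) - ψ u v) := by abel
  rw [this]
  refine (norm_add_le _ _).trans ?_
  have := mul_le_mul_of_nonneg_left a' hc
  have := mul_le_mul_of_nonneg_left b' hc
  linarith

lemma D_inc {T : ℝ} (P Q : Partition T) (ψ : ℝ → ℝ → E) (lam b m c : ℝ) (hP : P.mesh ≤ m)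
    (hQ : Q.mesh ≤ m) (hc : 0 ≤ c) (hb : 0 < b) (hl : 2 * b ≤ lam) (hl1 : lam ≤ 1)
    (hψ : IsHolderBiWith T lam c ψ) {u v r : ℝ}
    (hu : u ∈ Ico 0 T) (hv : v ∈ Ico 0 T) (hr : r ∈ Ioo u T) :
    ‖(step2 P Q ψ r v - ψ r v) - (step2 P Q ψ u v - ψ u v)‖ ≤ 4 * c * m ^ lam ∧
    ‖(step2 P Q ψ r v - ψ r v) - (step2 P Q ψ u v - ψ u v)‖ ≤
      4 * c * ((r - u) ^ (2 * b) * (m ^ (lam - 2 * b) + qP P lam b u)) := by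
  have hr' : r ∈ Ico 0 T := ⟨hu.1.trans hr.1.le, hr.2⟩
  have h0 : ‖(step2 P Q ψ r v - ψ r v) - (step2 P Q ψ u v - ψ u v)‖ ≤ 4 * c * m ^ lam := by
    refine (norm_sub_le _ _).trans ?_
    have := D_bound P Q ψ lam m c hP hQ hc (by linarith) hψ hu hv
    have := D_bound P Q ψ lam m c hP hQ hc (by linarith) hψ hr' hv
    linarith
  refine ⟨h0, ?_⟩
  obtain ⟨i, hi, hiu⟩ := P.exists_mem hu
  obtain ⟨i', hi', hir⟩ := P.exists_mem hr'
  obtain ⟨j, hj, hjv⟩ := Q.exists_mem hv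
  rw [step2_eq P Q ψ hi hj hiu hjv, step2_eq P Q ψ hi' hj hir hjv] at h0 ⊢
  exact inc_bound P lam b m c hP hc hb hl hl1 (fun x => ψ x (Q.pts j)) (fun x => ψ x v)
    (fun x hx y hy => hψ.1 y hy x hx _ (Q.mem_Icc hj.le))
    (fun x hx y hy => hψ.1 y hy x hx _ (Ico_subset_Icc_self hv)) hi hi' hr.1 hiu hir h0

lemma step2_swap {T : ℝ} (P Q : Partition T) (ψ : ℝ → ℝ → E) (u v : ℝ) :
    step2 P Q ψ u v = step2 Q P (fun x y => ψ y x) v u := by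
  unfold step2
  rw [Finset.sum_comm]
  refine Finset.sum_congr rfl fun i _ => Finset.sum_congr rfl fun j _ => ?_
  simp only [indicator, mem_prod, and_comm]

lemma D_inc' {T : ℝ} (P Q : Partition T) (ψ : ℝ → ℝ → E) (lam b m c : ℝ) (hP : P.mesh ≤ m)
    (hQ : Q.mesh ≤ m) (hc : 0 ≤ c) (hb : 0 < b) (hl : 2 * b ≤ lam) (hl1 : lam ≤ 1)
    (hψ : IsHolderBiWith T lam c ψ) {u v r : ℝ}
    (hu : u ∈ Ico 0 T) (hv : v ∈ Ico 0 T) (hr : r ∈ Ioo v T) :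
    ‖(step2 P Q ψ u r - ψ u r) - (step2 P Q ψ u v - ψ u v)‖ ≤ 4 * c * m ^ lam ∧
    ‖(step2 P Q ψ u r - ψ u r) - (step2 P Q ψ u v - ψ u v)‖ ≤
      4 * c * ((r - v) ^ (2 * b) * (m ^ (lam - 2 * b) + qP Q lam b v)) := by
  rw [step2_swap P Q ψ u r, step2_swap P Q ψ u v]
  refine D_inc Q P (fun x y => ψ y x) lam b m c hQ hP hc hb hl hl1 ⟨?_, ?_⟩ hv hu hr
  · intro a ha b hb v hv; exact hψ.2 v hv a ha b hb
  · intro v hv a ha b hb; exact hψ.1 a ha b hb v hv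

lemma le_of_le_of_le (x y z c : ℝ) (hc : 0 ≤ c) (hy : 0 ≤ y)
    (h1 : x ≤ c * y) (h2 : x ≤ c * z) : x ≤ c * (√y * √z) := by
  rcases le_total y z with h | h
  · refine h1.trans (mul_le_mul_of_nonneg_left ?_ hc)
    calc y = √y * √y := (Real.mul_self_sqrt hy).symm
      _ ≤ _ := by gcongr
  · refine h2.trans (mul_le_mul_of_nonneg_left ?_ hc)
    rcases le_total 0 z with hz | hz
    · calc z = √z * √z := (Real.mul_self_sqrt hz).symm
        _ ≤ _ := by gcongr
    · exact hz.trans (by positivity)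

lemma sqrt_rpow_mul (x b w : ℝ) (hx : 0 < x) : √(x ^ (2 * b) * w) = x ^ b * √w := by
  rw [Real.sqrt_mul (by positivity)]
  congr 1
  rw [Real.sqrt_eq_rpow, ← Real.rpow_mul hx.le]; congr 1; ring

lemma K'_bound (T α A b : ℝ) (K K' : ℝ → ℝ → ℝ) (hA : CondA T α A K K') {u r : ℝ}
    (hu : 0 < u) (hr : r ∈ Ioo u T) : |K' r u| * (r - u) ^ b ≤ |A| * (r - u) ^ (b - α - 1) := by
  have h := (hA.2 u r hu hr.1 hr.2.le).2
  have hd : 0 < r - u := by linarith [hr.1]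
  have e : (r - u) ^ (b - α - 1) = (r - u) ^ (-(α + 1)) * (r - u) ^ b := by
    rw [← Real.rpow_add hd]; congr 1; ring
  rw [e, ← mul_assoc]
  gcongr
  refine h.trans ?_
  gcongr
  exact le_abs_self A

lemma K_bound (T α A : ℝ) (K K' : ℝ → ℝ → ℝ) (hA : CondA T α A K K') {u : ℝ}
    (hu : u ∈ Ioo 0 T) : |K T u| ≤ |A| * √(u ^ (-(4 * α)) + (T - u) ^ (-(4 * α))) := by
  have h := hA.1 u T hu.1 hu.2 le_rfl
  have hd : 0 < T - u := by linarith [hu.2]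
  have hu0 := hu.1
  refine h.trans ?_
  rw [mul_assoc]
  have h0 : 0 ≤ u ^ (-α) * (T - u) ^ (-α) := by positivity
  refine (mul_le_mul_of_nonneg_right (le_abs_self A) h0).trans ?_
  gcongr
  apply Real.le_sqrt_of_sq_le
  have e : ∀ x : ℝ, 0 < x → x ^ (-(4 * α)) = ((x ^ (-α)) ^ 2) ^ 2 := by
    intro x hx
    rw [← pow_mul, ← Real.rpow_natCast, ← Real.rpow_mul hx.le]; congr 1; push_cast; ring
  rw [e u hu0, e _ hd, mul_pow]
  nlinarith [sq_nonneg ((u ^ (-α)) ^ 2 - ((T - u) ^ (-α)) ^ 2), sq_nonneg ((u ^ (-α)) ^ 2),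
    sq_nonneg (((T - u) ^ (-α)) ^ 2)]

lemma main_bound {T : ℝ} (P Q : Partition T) (ψ : ℝ → ℝ → E) (α lam b m c A : ℝ)
    (K K' : ℝ → ℝ → ℝ) (hA : CondA T α A K K') (hT : 0 < T)
    (hP : P.mesh ≤ m) (hα : 0 ≤ α) (hαb : α < b)
    (hQ : Q.mesh ≤ m) (hc : 0 ≤ c) (hl : 2 * b ≤ lam) (hl1 : lam ≤ 1)
    (hψ : IsHolderBiWith T lam c ψ) {u v : ℝ} (hu : u ∈ Ioo 0 T) (hv : v ∈ Ioo 0 T) :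
    ‖KstarT T K K' (fun x y => step2 P Q ψ x y - ψ x y) u v‖ ≤
      (2 * c * |A| ^ 2 + 8 * c * |A| ^ 2 * (T ^ (b - α) / (b - α)) +
        8 * c * |A| ^ 2 * (T ^ (b - α) / (b - α)) ^ 2) *
      (√(WP P α lam b m u) * √(WP Q α lam b m v)) := by
  have hm0 : 0 < m := P.mesh_pos.trans_le hP
  have hb : 0 < b := by linarith
  have hba : 0 < b - α := by linarith
  have hu' : u ∈ Ico 0 T := ⟨hu.1.le, hu.2⟩
  have hv' : v ∈ Ico 0 T := ⟨hv.1.le, hv.2⟩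
  have hKu := K_bound T α A K K' hA hu
  have hKv := K_bound T α A K K' hA hv
  obtain ⟨-, hWu1, hWu2⟩ := WP_ge P α lam b m u hm0 hu
  obtain ⟨-, hWv1, hWv2⟩ := WP_ge Q α lam b m v hm0 hv
  set s := √(WP P α lam b m u) with hs
  set t := √(WP Q α lam b m v) with ht
  set L := T ^ (b - α) / (b - α) with hL
  have hL0 : 0 ≤ L := by positivity
  have hs0 : 0 ≤ s := Real.sqrt_nonneg _
  have ht0 : 0 ≤ t := Real.sqrt_nonneg _
  have hml : 0 ≤ m ^ lam := by positivity
  set n := √(m ^ lam) with hn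
  have hn0 : 0 ≤ n := Real.sqrt_nonneg _
  have hnn : n * n = m ^ lam := Real.mul_self_sqrt hml
  -- |K| n ≤ |A| s
  have k1 : |K T u| * n ≤ |A| * s := by
    refine (mul_le_mul_of_nonneg_right hKu hn0).trans ?_
    rw [mul_assoc, mul_comm (√_) n, ← Real.sqrt_mul hml]
    refine mul_le_mul_of_nonneg_left (Real.sqrt_le_sqrt ?_) (abs_nonneg A)
    assumption
  have k2 : |K T v| * n ≤ |A| * t := by
    refine (mul_le_mul_of_nonneg_right hKv hn0).trans ?_
    rw [mul_assoc, mul_comm (√_) n, ← Real.sqrt_mul hml]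
    refine mul_le_mul_of_nonneg_left (Real.sqrt_le_sqrt ?_) (abs_nonneg A)
    assumption
  -- one-parameter increments
  have i1 : ∀ w ∈ Ico 0 T, ∀ r ∈ Ioo u T,
      ‖(step2 P Q ψ r w - ψ r w) - (step2 P Q ψ u w - ψ u w)‖ ≤
        4 * c * ((r - u) ^ (2 * b) * WP P α lam b m u) := by
    intro w hw r hr
    refine (D_inc P Q ψ lam b m c hP hQ hc hb hl hl1 hψ hu' hw hr).2.trans ?_
    have : 0 < r - u := by linarith [hr.1]
    gcongr
  have i2 : ∀ w ∈ Ico 0 T, ∀ r ∈ Ioo v T,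
      ‖(step2 P Q ψ w r - ψ w r) - (step2 P Q ψ w v - ψ w v)‖ ≤
        4 * c * ((r - v) ^ (2 * b) * WP Q α lam b m v) := by
    intro w hw r hr
    refine (D_inc' P Q ψ lam b m c hP hQ hc hb hl hl1 hψ hw hv' hr).2.trans ?_
    have : 0 < r - v := by linarith [hr.1]
    gcongr
  have a1 : ‖AK T K' (fun x => step2 P Q ψ x v - ψ x v) u‖ ≤ 4 * c * |A| * n * s * L := by
    refine aux_sing T u (b - α) (4 * c * |A| * n * s) hu.2 hba hu.1.le (by positivity) _ ?_
    intro r hr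
    have hd : 0 < r - u := by linarith [hr.1]
    have := le_of_le_of_le _ _ _ (4 * c) (by positivity) hml
      (D_inc P Q ψ lam b m c hP hQ hc hb hl hl1 hψ hu' hv' hr).1 (i1 v hv' r hr)
    rw [sqrt_rpow_mul _ _ _ hd] at this
    rw [norm_smul, Real.norm_eq_abs]
    calc _ ≤ |K' r u| * (4 * c * (n * ((r - u) ^ b * s))) := by gcongr
      _ = (4 * c * n * s) * (|K' r u| * (r - u) ^ b) := by ring
      _ ≤ (4 * c * n * s) * (|A| * (r - u) ^ (b - α - 1)) := by
        refine mul_le_mul_of_nonneg_left ?_ (by positivity)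
        exact K'_bound T α A b K K' hA hu.1 hr
      _ = _ := by ring
  have a2 : ‖AK T K' (fun y => step2 P Q ψ u y - ψ u y) v‖ ≤ 4 * c * |A| * n * t * L := by
    refine aux_sing T v (b - α) (4 * c * |A| * n * t) hv.2 hba hv.1.le (by positivity) _ ?_
    intro r hr
    have hd : 0 < r - v := by linarith [hr.1]
    have := le_of_le_of_le _ _ _ (4 * c) (by positivity) hml
      (D_inc' P Q ψ lam b m c hP hQ hc hb hl hl1 hψ hu' hv' hr).1 (i2 u hu' r hr)
    rw [sqrt_rpow_mul _ _ _ hd] at this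
    rw [norm_smul, Real.norm_eq_abs]
    calc _ ≤ |K' r v| * (4 * c * (n * ((r - v) ^ b * t))) := by gcongr
      _ = (4 * c * n * t) * (|K' r v| * (r - v) ^ b) := by ring
      _ ≤ (4 * c * n * t) * (|A| * (r - v) ^ (b - α - 1)) := by
        refine mul_le_mul_of_nonneg_left ?_ (by positivity)
        exact K'_bound T α A b K K' hA hv.1 hr
      _ = _ := by ring
  have a3 : ‖BK T K' (fun x y => step2 P Q ψ x y - ψ x y) u v‖ ≤
      (8 * c * |A| ^ 2 * s * t * L) * L := by
    refine aux_sing T v (b - α) _ hv.2 hba hv.1.le (by positivity) _ ?_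
    intro r₂ hr₂
    have hd₂ : 0 < r₂ - v := by linarith [hr₂.1]
    have key := aux_sing T u (b - α)
      (8 * c * |A| ^ 2 * s * t * (r₂ - v) ^ (b - α - 1)) hu.2 hba hu.1.le (by positivity)
      (fun r₁ => (K' r₁ u * K' r₂ v) • rectInc (fun x y => step2 P Q ψ x y - ψ x y) u r₁ v r₂) ?_
    · refine key.trans (le_of_eq ?_)
      ring
    intro r₁ hr₁
    have hd₁ : 0 < r₁ - u := by linarith [hr₁.1]
    have hr₁' : r₁ ∈ Ico 0 T := ⟨(hu.1.trans hr₁.1).le, hr₁.2⟩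
    have hr₂' : r₂ ∈ Ico 0 T := ⟨(hv.1.trans hr₂.1).le, hr₂.2⟩
    have b1 : ‖rectInc (fun x y => step2 P Q ψ x y - ψ x y) u r₁ v r₂‖ ≤
        8 * c * ((r₁ - u) ^ (2 * b) * WP P α lam b m u) := by
      have x1 := i1 r₂ hr₂' r₁ hr₁
      have x2 := i1 v hv' r₁ hr₁
      have : rectInc (fun x y => step2 P Q ψ x y - ψ x y) u r₁ v r₂ =
        ((step2 P Q ψ r₁ r₂ - ψ r₁ r₂) - (step2 P Q ψ u r₂ - ψ u r₂)) -
        ((step2 P Q ψ r₁ v - ψ r₁ v) - (step2 P Q ψ u v - ψ u v)) := by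
        simp only [rectInc]; abel
      rw [this]
      refine (norm_sub_le _ _).trans ?_
      linarith
    have b2 : ‖rectInc (fun x y => step2 P Q ψ x y - ψ x y) u r₁ v r₂‖ ≤
        8 * c * ((r₂ - v) ^ (2 * b) * WP Q α lam b m v) := by
      have x1 := i2 r₁ hr₁' r₂ hr₂
      have x2 := i2 u hu' r₂ hr₂
      have : rectInc (fun x y => step2 P Q ψ x y - ψ x y) u r₁ v r₂ =
        ((step2 P Q ψ r₁ r₂ - ψ r₁ r₂) - (step2 P Q ψ r₁ v - ψ r₁ v)) -
        ((step2 P Q ψ u r₂ - ψ u r₂) - (step2 P Q ψ u v - ψ u v)) := by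
        simp only [rectInc]; abel
      rw [this]
      refine (norm_sub_le _ _).trans ?_
      linarith
    have hW0 : 0 ≤ WP P α lam b m u := (WP_ge P α lam b m u hm0 hu).1.trans hWu1
    have := le_of_le_of_le _ _ _ (8 * c) (by positivity) (by positivity) b1 b2
    rw [sqrt_rpow_mul _ _ _ hd₁, sqrt_rpow_mul _ _ _ hd₂] at this
    simp only [norm_smul, Real.norm_eq_abs, abs_mul]
    calc _ ≤ |K' r₁ u| * |K' r₂ v| * (8 * c * ((r₁ - u) ^ b * s * ((r₂ - v) ^ b * t))) := by
          gcongr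
      _ = (8 * c * s * t) * ((|K' r₁ u| * (r₁ - u) ^ b) * (|K' r₂ v| * (r₂ - v) ^ b)) := by ring
      _ ≤ (8 * c * s * t) * ((|A| * (r₁ - u) ^ (b - α - 1)) * (|A| * (r₂ - v) ^ (b - α - 1))) := by
        gcongr ?_ * (?_ * ?_)
        · exact K'_bound T α A b K K' hA hu.1 hr₁
        · exact K'_bound T α A b K K' hA hv.1 hr₂
      _ = _ := by ring
  have a0 := D_bound P Q ψ lam m c hP hQ hc (by linarith) hψ hu' hv'
  unfold KstarT
  refine (norm_add_le _ _).trans ?_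
  have t1 : ‖(K T u * K T v) • (step2 P Q ψ u v - ψ u v)‖ ≤ 2 * c * |A| ^ 2 * (s * t) := by
    rw [norm_smul, Real.norm_eq_abs, abs_mul]
    calc _ ≤ |K T u| * |K T v| * (2 * c * m ^ lam) := by gcongr
      _ = 2 * c * ((|K T u| * n) * (|K T v| * n)) := by rw [← hnn]; ring
      _ ≤ 2 * c * ((|A| * s) * (|A| * t)) := by gcongr
      _ = _ := by ring
  have t2 : ‖K T v • AK T K' (fun x => step2 P Q ψ x v - ψ x v) u‖ ≤
      4 * c * |A| ^ 2 * L * (s * t) := by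
    rw [norm_smul, Real.norm_eq_abs]
    calc _ ≤ |K T v| * (4 * c * |A| * n * s * L) := by gcongr
      _ = 4 * c * |A| * s * L * (|K T v| * n) := by ring
      _ ≤ 4 * c * |A| * s * L * (|A| * t) := by gcongr
      _ = _ := by ring
  have t3 : ‖K T u • AK T K' (fun y => step2 P Q ψ u y - ψ u y) v‖ ≤
      4 * c * |A| ^ 2 * L * (s * t) := by
    rw [norm_smul, Real.norm_eq_abs]
    calc _ ≤ |K T u| * (4 * c * |A| * n * t * L) := by gcongr
      _ = 4 * c * |A| * t * L * (|K T u| * n) := by ring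
      _ ≤ 4 * c * |A| * t * L * (|A| * s) := by gcongr
      _ = _ := by ring
  have t123 := norm_add₃_le (a := (K T u * K T v) • (step2 P Q ψ u v - ψ u v))
    (b := K T v • AK T K' (fun x => step2 P Q ψ x v - ψ x v) u)
    (c := K T u • AK T K' (fun y => step2 P Q ψ u y - ψ u y) v)
  refine (add_le_add t123 a3).trans ?_
  nlinarith

end aux

/-- Corollary 4.2: for a `λ`-Hölder bi-continuous `ψ` with `λ > 2α`,
both the `L²([0,T]²)` and diagonal `L¹([0,T])` convergences hold as the mesh tends to `0`. -/
theorem kstarT_step2_tendsto_of_holderBi {E : Type*} [NormedAddCommGroup E] [NormedSpace ℝ E]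
    [CompleteSpace E] (T α lam : ℝ) (hT : 0 < T) (hα : 0 ≤ α) (hα' : α < 1 / 4)
    (K K' : ℝ → ℝ → ℝ) (hK : IsVolterraKernel K) (hA : ∃ C : ℝ, CondA T α C K K')
    (ψ : ℝ → ℝ → E) (hlam : 0 < lam) (hlam' : lam ≤ 1)
    (hψ : IsHolderBi T lam ψ) (hαlam : 2 * α < lam) :
    (∀ ε > 0, ∃ δ > 0, ∀ P Q : Partition T, max P.mesh Q.mesh < δ →
      (∫ u in (0:ℝ)..T, ∫ v in (0:ℝ)..T,
          ‖KstarT T K K' (fun x y => step2 P Q ψ x y - ψ x y) u v‖ ^ 2) < ε) ∧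
    (∀ ε > 0, ∃ δ > 0, ∀ P Q : Partition T, max P.mesh Q.mesh < δ →
      (∫ r in (0:ℝ)..T,
          ‖KstarT T K K' (fun x y => step2 P Q ψ x y - ψ x y) r r‖) < ε) := by
  obtain ⟨A, hA⟩ := hA
  obtain ⟨c₀, hψ₀⟩ := hψ
  obtain ⟨c, hc, hψ⟩ : ∃ c : ℝ, 0 ≤ c ∧ IsHolderBiWith T lam c ψ := by
    refine ⟨|c₀|, abs_nonneg _, ?_, ?_⟩
    · intro a ha b hb v hv
      refine (hψ₀.1 a ha b hb v hv).trans ?_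
      gcongr; exact le_abs_self _
    · intro u hu a ha b hb
      refine (hψ₀.2 u hu a ha b hb).trans ?_
      gcongr; exact le_abs_self _
  obtain ⟨b, hαb, hbl⟩ : ∃ b, α < b ∧ 2 * b < lam :=
    ⟨(α + lam / 2) / 2, by linarith, by linarith⟩
  set M := 2 * c * |A| ^ 2 + 8 * c * |A| ^ 2 * (T ^ (b - α) / (b - α)) +
        8 * c * |A| ^ 2 * (T ^ (b - α) / (b - α)) ^ 2 with hM
  have hba : 0 < b - α := by linarith
  have hM0 : 0 ≤ M := by positivity
  set J := ∫ u in (0:ℝ)..T, (u ^ (-(4 * α)) + (T - u) ^ (-(4 * α))) with hJ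
  set β : ℝ → ℝ := fun m => m ^ lam * J + m ^ (lam - 2 * b) * (T + T / (1 - 2 * b)) with hβ
  have hβc : Filter.Tendsto β (nhds 0) (nhds 0) := by
    have h1 : Filter.Tendsto (fun m : ℝ => m ^ lam) (nhds 0) (nhds 0) := by
      have := (Real.continuousAt_rpow_const 0 lam (Or.inr hlam.le)).tendsto
      rwa [Real.zero_rpow hlam.ne'] at this
    have h2 : Filter.Tendsto (fun m : ℝ => m ^ (lam - 2 * b)) (nhds 0) (nhds 0) := by
      have := (Real.continuousAt_rpow_const 0 (lam - 2 * b) (Or.inr (by linarith))).tendsto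
      rwa [Real.zero_rpow (by linarith)] at this
    have := (h1.mul_const J).add (h2.mul_const (T + T / (1 - 2 * b)))
    simpa using this
  have hWI : ∀ (P : Partition T) (m : ℝ), P.mesh ≤ m →
      IntervalIntegrable (WP P α lam b m) volume 0 T ∧
      ∫ u in (0:ℝ)..T, WP P α lam b m u ≤ β m := fun P m hP =>
    WP_int P α lam b m hT hα' hP (by linarith) hbl.le
  have hW0 : ∀ (P : Partition T) (m : ℝ), P.mesh ≤ m → ∀ u ∈ Ioo 0 T, 0 ≤ WP P α lam b m u := by
    intro P m hP u hu
    have := WP_ge P α lam b m u (P.mesh_pos.trans_le hP) hu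
    exact this.1.trans this.2.1
  have hWI0 : ∀ (P : Partition T) (m : ℝ), P.mesh ≤ m →
      0 ≤ ∫ u in (0:ℝ)..T, WP P α lam b m u := by
    intro P m hP
    have := aux_int_le T hT (fun _ => 0) (WP P α lam b m)
      (fun r hr => by simpa using hW0 P m hP r hr) (hWI P m hP).1
    simpa using this
  have hfin : ∀ G : ℝ → ℝ, Filter.Tendsto G (nhds 0) (nhds 0) → ∀ ε > 0, ∃ δ > 0, ∀ m, 0 < m →
      m < δ → G m < ε := by
    intro G hG ε hε
    obtain ⟨δ, hδ, h⟩ := Metric.tendsto_nhds_nhds.mp hG ε hε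
    refine ⟨δ, hδ, fun m hm hmδ => ?_⟩
    have := h (x := m) (by simpa [abs_of_pos hm] using hmδ)
    rw [Real.dist_eq, sub_zero] at this
    exact (le_abs_self _).trans_lt this
  constructor
  · intro ε hε
    have hG : Filter.Tendsto (fun m => M ^ 2 * (β m * β m)) (nhds 0) (nhds 0) := by
      simpa using (hβc.mul hβc).const_mul (M ^ 2)
    obtain ⟨δ, hδ, h⟩ := hfin _ hG ε hε
    refine ⟨δ, hδ, fun P Q hPQ => ?_⟩
    set m := max P.mesh Q.mesh
    have hP : P.mesh ≤ m := le_max_left _ _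
    have hQ : Q.mesh ≤ m := le_max_right _ _
    have hm0 : 0 < m := P.mesh_pos.trans_le hP
    refine lt_of_le_of_lt ?_ (h m hm0 hPQ)
    have hpt : ∀ u ∈ Ioo 0 T, ∀ v ∈ Ioo 0 T,
        ‖KstarT T K K' (fun x y => step2 P Q ψ x y - ψ x y) u v‖ ^ 2 ≤
          M ^ 2 * WP P α lam b m u * WP Q α lam b m v := by
      intro u hu v hv
      have := main_bound P Q ψ α lam b m c A K K' hA hT hP hα hαb hQ hc hbl.le hlam' hψ hu hv
      refine (pow_le_pow_left₀ (norm_nonneg _) this 2).trans (le_of_eq ?_)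
      rw [mul_pow, mul_pow, Real.sq_sqrt (hW0 P m hP u hu), Real.sq_sqrt (hW0 Q m hQ v hv)]
      ring
    have hIP := hWI P m hP
    have hIQ := hWI Q m hQ
    have h0P := hWI0 P m hP
    have h0Q := hWI0 Q m hQ
    have step : ∀ u ∈ Ioo 0 T, ‖∫ v in (0:ℝ)..T,
        ‖KstarT T K K' (fun x y => step2 P Q ψ x y - ψ x y) u v‖ ^ 2‖ ≤
        (M ^ 2 * ∫ v in (0:ℝ)..T, WP Q α lam b m v) * WP P α lam b m u := by
      intro u hu
      rw [Real.norm_of_nonneg (intervalIntegral.integral_nonneg hT.le (fun _ _ => by positivity))]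
      refine (aux_int_le T hT _ (fun v => M ^ 2 * WP P α lam b m u * WP Q α lam b m v)
        (fun v hv => ?_) (hIQ.1.const_mul _)).trans (le_of_eq ?_)
      · rw [Real.norm_of_nonneg (by positivity)]; exact hpt u hu v hv
      · rw [intervalIntegral.integral_const_mul]; ring
    refine (aux_int_le T hT _ _ step (hIP.1.const_mul _)).trans ?_
    rw [intervalIntegral.integral_const_mul, mul_assoc]
    gcongr
    · exact h0Q.trans hIQ.2
    · exact hIQ.2
    · exact hIP.2
  · intro ε hε
    have hG : Filter.Tendsto (fun m => M * β m) (nhds 0) (nhds 0) := by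
      simpa using hβc.const_mul M
    obtain ⟨δ, hδ, h⟩ := hfin _ hG ε hε
    refine ⟨δ, hδ, fun P Q hPQ => ?_⟩
    set m := max P.mesh Q.mesh
    have hP : P.mesh ≤ m := le_max_left _ _
    have hQ : Q.mesh ≤ m := le_max_right _ _
    have hm0 : 0 < m := P.mesh_pos.trans_le hP
    refine lt_of_le_of_lt ?_ (h m hm0 hPQ)
    have hIP := hWI P m hP
    have hIQ := hWI Q m hQ
    refine (aux_int_le T hT _ (fun r => M / 2 * (WP P α lam b m r + WP Q α lam b m r))
      (fun r hr => ?_) ((hIP.1.add hIQ.1).const_mul _)).trans ?_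
    · rw [norm_norm]
      refine (main_bound P Q ψ α lam b m c A K K' hA hT hP hα hαb hQ hc hbl.le hlam' hψ
        hr hr).trans ?_
      rw [div_mul_eq_mul_div, mul_div_assoc]
      refine mul_le_mul_of_nonneg_left ?_ hM0
      have e1 := Real.sq_sqrt (hW0 P m hP r hr)
      have e2 := Real.sq_sqrt (hW0 Q m hQ r hr)
      nlinarith [sq_nonneg (√(WP P α lam b m r) - √(WP Q α lam b m r))]
    · rw [intervalIntegral.integral_const_mul, intervalIntegral.integral_add hIP.1 hIQ.1]
      have := hIP.2
      have := hIQ.2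
      nlinarith

end YS
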